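/- arXiv:1810.03510 — 4 statements merged into one kernel-verified Lean document; each statement's English description precedes it below -/
import Mathlib

section
/- For probability mass functions g and f on a finite type X with f strictly positive, the relative entropy is bounded by the chi-squared divergence: D(g‖f) = Σ_x g(x) ln(g(x)/f(x)) ≤ Σ_x (g(x) − f(x))²/f(x). -/
/-!
The function `klFun t = t * log t + 1 - t` satisfies `0 ≤ klFun t ≤ (t - 1) ^ 2` for `t ≥ 0`, the
upper bound being `log t ≤ t - 1`. At the likelihood ratio `t = a / b`, scaled by `b`, this traps
`a * log (a / b)` between `a - b` and `(a - b) ^ 2 / b + (a - b)`. The lower bound gives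
integrability, and the term `a - b` integrates to the difference of the total masses.
-/

open InformationTheory MeasureTheory

lemma klFun_le_sub_one_sq {t : ℝ} (ht : 0 ≤ t) : klFun t ≤ (t - 1) ^ 2 := by
  have mul_log_le : t * Real.log t ≤ t * (t - 1) := by
    rcases ht.eq_or_lt with rfl | ht
    · simp
    · exact mul_le_mul_of_nonneg_left (Real.log_le_sub_one_of_pos ht) ht.le
  rw [klFun_apply]
  linarith

section Pointwise

variable {a b : ℝ}

lemma mul_log_div_eq_mul_klFun_add_sub (a : ℝ) (hb : b ≠ 0) :
    a * Real.log (a / b) = b * klFun (a / b) + (a - b) := by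
  rw [klFun_apply]
  field_simp
  ring

lemma sub_le_mul_log_div (ha : 0 ≤ a) (hb : 0 < b) : a - b ≤ a * Real.log (a / b) := by
  rw [mul_log_div_eq_mul_klFun_add_sub a hb.ne']
  exact le_add_of_nonneg_left (mul_nonneg hb.le (klFun_nonneg (div_nonneg ha hb.le)))

lemma mul_log_div_le_sub_sq_div_add_sub (ha : 0 ≤ a) (hb : 0 < b) :
    a * Real.log (a / b) ≤ (a - b) ^ 2 / b + (a - b) :=
  calc
    a * Real.log (a / b) = b * klFun (a / b) + (a - b) :=
      mul_log_div_eq_mul_klFun_add_sub a hb.ne'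
    _ ≤ b * (a / b - 1) ^ 2 + (a - b) := by
      gcongr
      exact klFun_le_sub_one_sq (div_nonneg ha hb.le)
    _ = (a - b) ^ 2 / b + (a - b) := by
      field_simp

end Pointwise

section Integral

variable {α : Type*} [MeasurableSpace α] {μ : Measure α} {g f : α → ℝ}

lemma integrable_mul_log_div (hg0 : ∀ᵐ x ∂μ, 0 ≤ g x) (hf0 : ∀ᵐ x ∂μ, 0 < f x)
    (hg : Integrable g μ) (hf : Integrable f μ)
    (hχ : Integrable (fun x ↦ (g x - f x) ^ 2 / f x) μ) :
    Integrable (fun x ↦ g x * Real.log (g x / f x)) μ := by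
  have aestronglyMeasurable_mul_log : AEStronglyMeasurable (fun x ↦ g x * Real.log (g x / f x)) μ :=
    (hg.aemeasurable.mul (hg.aemeasurable.div hf.aemeasurable).log).aestronglyMeasurable
  refine integrable_of_le_of_le aestronglyMeasurable_mul_log ?_ ?_
    (hg.sub hf) (hχ.add (hg.sub hf))
  · filter_upwards [hg0, hf0] with x hgx hfx using sub_le_mul_log_div hgx hfx
  · filter_upwards [hg0, hf0] with x hgx hfx using mul_log_div_le_sub_sq_div_add_sub hgx hfx

lemma integral_mul_log_div_le (hg0 : ∀ᵐ x ∂μ, 0 ≤ g x) (hf0 : ∀ᵐ x ∂μ, 0 < f x)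
    (hg : Integrable g μ) (hf : Integrable f μ)
    (hχ : Integrable (fun x ↦ (g x - f x) ^ 2 / f x) μ) :
    ∫ x, g x * Real.log (g x / f x) ∂μ ≤
      ∫ x, (g x - f x) ^ 2 / f x ∂μ + (∫ x, g x ∂μ - ∫ x, f x ∂μ) :=
  calc
    ∫ x, g x * Real.log (g x / f x) ∂μ ≤ ∫ x, ((g x - f x) ^ 2 / f x + (g x - f x)) ∂μ := by
      refine integral_mono_ae (integrable_mul_log_div hg0 hf0 hg hf hχ) (hχ.add (hg.sub hf)) ?_
      filter_upwards [hg0, hf0] with x hgx hfx using mul_log_div_le_sub_sq_div_add_sub hgx hfx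
    _ = ∫ x, (g x - f x) ^ 2 / f x ∂μ + (∫ x, g x ∂μ - ∫ x, f x ∂μ) := by
      rw [← integral_sub hg hf]
      exact integral_add hχ (hg.sub hf)

theorem relativeEntropy_le_chiSquared_general (hg0 : ∀ᵐ x ∂μ, 0 ≤ g x)
    (hf0 : ∀ᵐ x ∂μ, 0 < f x) (hg : Integrable g μ) (hf : Integrable f μ)
    (hgf : ∫ x, g x ∂μ ≤ ∫ x, f x ∂μ) (hχ : Integrable (fun x ↦ (g x - f x) ^ 2 / f x) μ) :
    Integrable (fun x ↦ g x * Real.log (g x / f x)) μ ∧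
      ∫ x, g x * Real.log (g x / f x) ∂μ ≤ ∫ x, (g x - f x) ^ 2 / f x ∂μ :=
  ⟨integrable_mul_log_div hg0 hf0 hg hf hχ,
    (integral_mul_log_div_le hg0 hf0 hg hf hχ).trans
      (add_le_of_nonpos_right (sub_nonpos.mpr hgf))⟩

end Integral

/-- For probability mass functions `g` and `f` on a finite type `X` with `f` strictly
positive, the relative entropy `D(g‖f) = ∑ x, g x * ln (g x / f x)` is bounded by the
chi-squared divergence `∑ x, (g x - f x)^2 / f x`. -/
theorem relativeEntropy_le_chiSquared
    {X : Type*} [Fintype X] (g f : X → ℝ)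
    (hg0 : ∀ x, 0 ≤ g x) (hg1 : ∑ x, g x = 1)
    (hf0 : ∀ x, 0 < f x) (hf1 : ∑ x, f x = 1) :
    ∑ x, g x * Real.log (g x / f x) ≤ ∑ x, (g x - f x) ^ 2 / f x := by
  let _ : MeasurableSpace X := ⊤
  simpa only [integral_count] using
    (relativeEntropy_le_chiSquared_general (μ := .count) (.of_forall hg0) (.of_forall hf0)
      .of_finite .of_finite (by simp [hg1, hf1]) .of_finite).2
end

section
/- In the packet-size modification setup, the function f̃ is itself a probability mass function on Fin K (it is nonnegative and sums to 1), and its relative entropy from f satisfies D(f̃‖f) ≤ 2 ξ² p². -/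
/-! The inequality `log x ≤ x - 1` bounds relative entropy by the chi-square divergence
`∑ (g - f)² / f`. Inserting packets changes every `f j` by at most a factor `ξ * p` of itself,
so the chi-square divergence is at most `(ξ * p)²`. -/

open Finset

section RelEntropy

variable {ι : Type*} {s : Finset ι} {f g : ι → ℝ} {c : ℝ}

/-- The relative entropy `D(g‖f)`, in nats, of two nonnegative weights on a finite set. The
convention `0 ln 0 = 0` is built into `Real.log`; where `f i = 0 < g i` the summand is `0`
instead of `∞`, so the definition is meaningful only if `f` is positive wherever `g` is. -/
noncomputable def relEntropy (s : Finset ι) (g f : ι → ℝ) : ℝ :=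
  ∑ i ∈ s, g i * Real.log (g i / f i)

lemma mul_log_div_le_sub_add_sq_div {a b : ℝ} (ha : 0 < a) (hb : 0 ≤ b) :
    b * Real.log (b / a) ≤ b - a + (b - a) ^ 2 / a := by
  calc b * Real.log (b / a) ≤ b * (b / a - 1) := by
        rcases hb.eq_or_lt with rfl | hb
        · simp
        · gcongr
          exact Real.log_le_sub_one_of_pos (div_pos hb ha)
    _ = b - a + (b - a) ^ 2 / a := by field_simp; ring

lemma relEntropy_le_sum_sq_div (hf : ∀ i ∈ s, 0 < f i) (hg : ∀ i ∈ s, 0 ≤ g i)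
    (hfg : ∑ i ∈ s, g i = ∑ i ∈ s, f i) :
    relEntropy s g f ≤ ∑ i ∈ s, (g i - f i) ^ 2 / f i := by
  calc relEntropy s g f ≤ ∑ i ∈ s, (g i - f i + (g i - f i) ^ 2 / f i) :=
        sum_le_sum fun i hi => mul_log_div_le_sub_add_sq_div (hf i hi) (hg i hi)
    _ = ∑ i ∈ s, (g i - f i) ^ 2 / f i := by
        rw [sum_add_distrib, sum_sub_distrib, hfg, sub_self, zero_add]

lemma relEntropy_le_sq_mul_sum_of_abs_sub_le (hf : ∀ i ∈ s, 0 < f i) (hg : ∀ i ∈ s, 0 ≤ g i)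
    (hfg : ∑ i ∈ s, g i = ∑ i ∈ s, f i) (hc : ∀ i ∈ s, |g i - f i| ≤ c * f i) :
    relEntropy s g f ≤ c ^ 2 * ∑ i ∈ s, f i := by
  refine (relEntropy_le_sum_sq_div hf hg hfg).trans ?_
  rw [mul_sum]
  refine sum_le_sum fun i hi => (div_le_iff₀ (hf i hi)).mpr ?_
  calc (g i - f i) ^ 2 ≤ (c * f i) ^ 2 := sq_le_sq.mpr ((hc i hi).trans (le_abs_self _))
    _ = c ^ 2 * f i * f i := by ring

end RelEntropy

section Insertion

variable {m j : ℕ} {p ξ : ℝ} {f : ℕ → ℝ}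

/-- The modified weights `f̃`: a fraction `p` of the weight of each size `j < m` is moved to the
size `j + m`. As with `f`, only the values at `j < 2 * m` are meaningful. -/
def insertionPmf (m : ℕ) (p : ℝ) (f : ℕ → ℝ) (j : ℕ) : ℝ :=
  if j < m then (1 - p) * f j else f j + p * f (j - m)

lemma insertionPmf_of_lt (h : j < m) : insertionPmf m p f j = (1 - p) * f j :=
  if_pos h

lemma insertionPmf_of_le (h : m ≤ j) : insertionPmf m p f j = f j + p * f (j - m) :=
  if_neg h.not_gt

lemma insertionPmf_nonneg (hp0 : 0 ≤ p) (hp1 : p ≤ 1) (hf : ∀ i ≤ j, 0 ≤ f i) :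
    0 ≤ insertionPmf m p f j := by
  rcases lt_or_ge j m with hjm | hmj
  · rw [insertionPmf_of_lt hjm]
    exact mul_nonneg (sub_nonneg.mpr hp1) (hf j le_rfl)
  · rw [insertionPmf_of_le hmj]
    exact add_nonneg (hf j le_rfl) (mul_nonneg hp0 (hf _ (Nat.sub_le j m)))

lemma sum_range_insertionPmf (m : ℕ) (p : ℝ) (f : ℕ → ℝ) :
    ∑ j ∈ range (2 * m), insertionPmf m p f j = ∑ j ∈ range (2 * m), f j := by
  have lower : ∑ j ∈ range m, insertionPmf m p f j = (1 - p) * ∑ j ∈ range m, f j := by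
    rw [mul_sum]
    exact sum_congr rfl fun j hj => insertionPmf_of_lt (mem_range.mp hj)
  have upper : ∑ j ∈ range m, insertionPmf m p f (m + j) =
      ∑ j ∈ range m, f (m + j) + p * ∑ j ∈ range m, f j := by
    simp only [insertionPmf_of_le (Nat.le_add_right m _), Nat.add_sub_cancel_left,
      sum_add_distrib, mul_sum]
  rw [two_mul, sum_range_add, sum_range_add, lower, upper]
  ring

lemma abs_insertionPmf_sub_le (hp : 0 ≤ p) (hξ : 1 ≤ ξ) (hf : ∀ i ≤ j, 0 ≤ f i)
    (hratio : m ≤ j → f (j - m) ≤ ξ * f j) :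
    |insertionPmf m p f j - f j| ≤ ξ * p * f j := by
  have hfj : 0 ≤ f j := hf j le_rfl
  rcases lt_or_ge j m with hjm | hmj
  · calc |insertionPmf m p f j - f j| = |-(p * f j)| := by
          rw [insertionPmf_of_lt hjm]; ring_nf
      _ = p * f j := by rw [abs_neg, abs_of_nonneg (mul_nonneg hp hfj)]
      _ ≤ ξ * p * f j := by gcongr; exact le_mul_of_one_le_left hp hξ
  · calc |insertionPmf m p f j - f j| = p * f (j - m) := by
          rw [insertionPmf_of_le hmj, add_sub_cancel_left,
            abs_of_nonneg (mul_nonneg hp (hf _ (Nat.sub_le j m)))]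
      _ ≤ p * (ξ * f j) := by gcongr; exact hratio hmj
      _ = ξ * p * f j := by ring

lemma relEntropy_insertionPmf_le (hp0 : 0 ≤ p) (hp1 : p ≤ 1) (hξ : 1 ≤ ξ)
    (hf : ∀ j < 2 * m, 0 < f j) (hratio : ∀ j < 2 * m, m ≤ j → f (j - m) ≤ ξ * f j) :
    relEntropy (range (2 * m)) (insertionPmf m p f) f ≤
      (ξ * p) ^ 2 * ∑ j ∈ range (2 * m), f j := by
  have nonneg_le : ∀ j ∈ range (2 * m), ∀ i ≤ j, 0 ≤ f i :=
    fun j hj i hij => (hf i (hij.trans_lt (mem_range.mp hj))).le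
  exact relEntropy_le_sq_mul_sum_of_abs_sub_le (fun j hj => hf j (mem_range.mp hj))
    (fun j hj => insertionPmf_nonneg hp0 hp1 (nonneg_le j hj))
    (sum_range_insertionPmf m p f)
    (fun j hj => abs_insertionPmf_sub_le hp0 hξ (nonneg_le j hj) (hratio j (mem_range.mp hj)))

end Insertion

/-- Packet-size modification setup: `K = 2*m` possible packet sizes with pmf `f`
(strictly positive on `{0, …, 2*m - 1}`), insertion probability `p ∈ (0,1)`,
modified pmf `f̃(j) = (1-p) f(j)` for `j < m` and `f̃(j) = f(j) + p f(j-m)` for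
`m ≤ j < 2m`, `ξ₀ = max_{m ≤ j ≤ 2m-1} f(j-m)/f(j)` and `ξ = max 1 ξ₀`.
Then `f̃` is itself a pmf and `D(f̃‖f) ≤ 2 ξ² p²`. -/
theorem modified_packet_size_pmf_and_relativeEntropy_bound
    (m : ℕ) (hm : 1 ≤ m) (f : ℕ → ℝ)
    (hf0 : ∀ j < 2 * m, 0 < f j) (hf1 : ∑ j ∈ Finset.range (2 * m), f j = 1)
    (p : ℝ) (hp0 : 0 < p) (hp1 : p < 1)
    (ftilde : ℕ → ℝ)
    (hft : ∀ j < 2 * m,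
      ftilde j = if j < m then (1 - p) * f j else f j + p * f (j - m))
    (ξ₀ ξ : ℝ)
    (hξ₀ : ξ₀ = (Finset.Icc m (2 * m - 1)).sup'
      (Finset.nonempty_Icc.mpr (by omega)) (fun j => f (j - m) / f j))
    (hξ : ξ = max 1 ξ₀) :
    (∀ j < 2 * m, 0 ≤ ftilde j) ∧
    (∑ j ∈ Finset.range (2 * m), ftilde j = 1) ∧
    (∑ j ∈ Finset.range (2 * m), ftilde j * Real.log (ftilde j / f j)
      ≤ 2 * ξ ^ 2 * p ^ 2) := by
  have hft' : ∀ j < 2 * m, ftilde j = insertionPmf m p f j := hft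
  have hratio : ∀ j < 2 * m, m ≤ j → f (j - m) ≤ ξ * f j := by
    intro j hj hmj
    have ratio_le : f (j - m) / f j ≤ ξ₀ :=
      hξ₀ ▸ le_sup' (fun j => f (j - m) / f j) (mem_Icc.mpr ⟨hmj, by omega⟩)
    exact (div_le_iff₀ (hf0 j hj)).mp (ratio_le.trans (hξ ▸ le_max_right 1 ξ₀))
  refine ⟨fun j hj => ?_, ?_, ?_⟩
  · rw [hft' j hj]
    exact insertionPmf_nonneg hp0.le hp1.le fun i hij => (hf0 i (hij.trans_lt hj)).le
  · rw [sum_congr rfl fun j hj => hft' j (mem_range.mp hj), sum_range_insertionPmf, hf1]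
  · calc ∑ j ∈ range (2 * m), ftilde j * Real.log (ftilde j / f j)
        = relEntropy (range (2 * m)) (insertionPmf m p f) f :=
          sum_congr rfl fun j hj => by rw [hft' j (mem_range.mp hj)]
      _ ≤ (ξ * p) ^ 2 * ∑ j ∈ range (2 * m), f j :=
          relEntropy_insertionPmf_le hp0.le hp1.le (hξ ▸ le_max_left 1 ξ₀) hf0 hratio
      _ ≤ 2 * ξ ^ 2 * p ^ 2 := by
          rw [hf1]
          linarith [sq_nonneg (ξ * p), mul_pow ξ p 2]
end

section
/- (Covertness in Theorem 1/2.) Fix ε ∈ (0, 1/2) and n ≥ 1 large enough that ε/(ξ√n) < 1, and take insertion probability p = ε/(ξ√n) in the packet-size modification setup. Let P₀ be the n-fold product pmf of f on (Fin K)ⁿ and P₁ the n-fold product pmf of f̃ on (Fin K)ⁿ. Then for every subset A ⊆ (Fin K)ⁿ (Willie's rejection region), the detection error probability satisfies (P₀(A) + 1 − P₁(A))/2 ≥ 1/2 − ε; that is, Willie's error probability P_e = (P_FA + P_MD)/2 is at least 1/2 − ε. -/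
/-!
A chi-squared argument. By Cauchy–Schwarz, the probability of an event changes by at most `√χ²`,
and `1 + χ²` is multiplicative over products, so `n` independent packets contribute
`χ² ≤ (1 + χ₁²)ⁿ - 1 ≤ exp (n χ₁²) - 1 ≤ 2 n χ₁²` as long as `n χ₁² ≤ 1`. One packet contributes
`χ₁² ≤ p² (1 + ξ)`, because insertion moves a mass `p f(j)` from each small size `j` to `j + m`,
and `ξ` dominates the ratio of the two masses. The choice `p = ε / (ξ √n)` turns this into
`n χ₁² ≤ 2 ε²`, so every event changes its probability by at most `2 ε`.
-/

open Finset

section ChiSquared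

variable {α : Type*} [Fintype α] {P Q : α → ℝ}

/-- The chi-squared divergence `χ²(Q ‖ P)` of two mass functions on a finite type. It is meant for
`P` without zeros: where `P x = 0`, the summand is `0` instead of `∞`. -/
noncomputable def chiSqDiv (Q P : α → ℝ) : ℝ :=
  ∑ x, (Q x - P x) ^ 2 / P x

lemma chiSqDiv_comp_equiv {β : Type*} [Fintype β] (Q P : α → ℝ) (e : β ≃ α) :
    chiSqDiv (Q ∘ e) (P ∘ e) = chiSqDiv Q P :=
  e.sum_comp fun x => (Q x - P x) ^ 2 / P x

lemma one_add_chiSqDiv_eq_sum (hP : ∀ x, P x ≠ 0) (hP1 : ∑ x, P x = 1) (hQ1 : ∑ x, Q x = 1) :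
    1 + chiSqDiv Q P = ∑ x, Q x ^ 2 / P x := by
  have expand (x : α) : (Q x - P x) ^ 2 / P x = Q x ^ 2 / P x - 2 * Q x + P x := by
    have := hP x
    field_simp
    ring
  simp only [chiSqDiv, expand, sum_add_distrib, sum_sub_distrib, ← mul_sum, hP1, hQ1]
  ring

lemma sq_sum_sub_sum_le_chiSqDiv (hP : ∀ x, 0 < P x) (hP1 : ∑ x, P x = 1) (A : Finset α) :
    (∑ x ∈ A, Q x - ∑ x ∈ A, P x) ^ 2 ≤ chiSqDiv Q P := by
  have term_nonneg (x : α) : 0 ≤ (Q x - P x) ^ 2 / P x := div_nonneg (sq_nonneg _) (hP x).le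
  have prob_le_one : ∑ x ∈ A, P x ≤ 1 := hP1 ▸ sum_le_univ_sum_of_nonneg fun x => (hP x).le
  calc (∑ x ∈ A, Q x - ∑ x ∈ A, P x) ^ 2
      = (∑ x ∈ A, (Q x - P x)) ^ 2 := by rw [sum_sub_distrib]
    _ ≤ (∑ x ∈ A, (Q x - P x) ^ 2 / P x) * ∑ x ∈ A, P x :=
        sum_sq_le_sum_mul_sum_of_sq_le_mul A (fun x _ => term_nonneg x) (fun x _ => (hP x).le)
          fun x _ => (div_mul_cancel₀ _ (hP x).ne').ge
    _ ≤ ∑ x ∈ A, (Q x - P x) ^ 2 / P x :=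
        mul_le_of_le_one_right (sum_nonneg fun x _ => term_nonneg x) prob_le_one
    _ ≤ chiSqDiv Q P := sum_le_univ_sum_of_nonneg term_nonneg

lemma half_sub_le_testing_error_of_chiSqDiv_le (hP : ∀ x, 0 < P x) (hP1 : ∑ x, P x = 1) {ε : ℝ}
    (hε : 0 ≤ ε) (hχ : chiSqDiv Q P ≤ (2 * ε) ^ 2) (A : Finset α) :
    1 / 2 - ε ≤ (∑ x ∈ A, P x + (1 - ∑ x ∈ A, Q x)) / 2 := by
  have deviation : ∑ x ∈ A, Q x - ∑ x ∈ A, P x ≤ 2 * ε :=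
    le_of_sq_le_sq ((sq_sum_sub_sum_le_chiSqDiv hP hP1 A).trans hχ) (by positivity)
  linarith

end ChiSquared

section Product

variable {ι : Type*} [Fintype ι] {α : ι → Type*} [∀ i, Fintype (α i)]
  {P Q : ∀ i, α i → ℝ}

lemma sum_prod_eq_one [DecidableEq ι] (hP1 : ∀ i, ∑ a, P i a = 1) :
    ∑ x : ∀ i, α i, ∏ i, P i (x i) = 1 := by
  rw [← Fintype.prod_sum, Fintype.prod_eq_one _ hP1]

lemma one_add_chiSqDiv_pi [DecidableEq ι] (hP : ∀ i a, P i a ≠ 0)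
    (hP1 : ∀ i, ∑ a, P i a = 1) (hQ1 : ∀ i, ∑ a, Q i a = 1) :
    1 + chiSqDiv (fun x : ∀ i, α i => ∏ i, Q i (x i)) (fun x => ∏ i, P i (x i)) =
      ∏ i, (1 + chiSqDiv (Q i) (P i)) := by
  rw [one_add_chiSqDiv_eq_sum (fun x => prod_ne_zero_iff.mpr fun i _ => hP i (x i))
    (sum_prod_eq_one hP1) (sum_prod_eq_one hQ1)]
  simp only [one_add_chiSqDiv_eq_sum (hP _) (hP1 _) (hQ1 _), Fintype.prod_sum, prod_div_distrib,
    prod_pow]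

lemma chiSqDiv_pi_le_two_mul_sum [DecidableEq ι] (hP : ∀ i a, 0 < P i a)
    (hP1 : ∀ i, ∑ a, P i a = 1) (hQ1 : ∀ i, ∑ a, Q i a = 1)
    (hχ : ∑ i, chiSqDiv (Q i) (P i) ≤ 1) :
    chiSqDiv (fun x : ∀ i, α i => ∏ i, Q i (x i)) (fun x => ∏ i, P i (x i)) ≤
      2 * ∑ i, chiSqDiv (Q i) (P i) := by
  have nonneg (i : ι) : 0 ≤ chiSqDiv (Q i) (P i) :=
    sum_nonneg fun a _ => div_nonneg (sq_nonneg _) (hP i a).le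
  have total_nonneg : 0 ≤ ∑ i, chiSqDiv (Q i) (P i) := sum_nonneg fun i _ => nonneg i
  have prod_le_exp := Real.prod_one_add_le_exp_sum univ nonneg
  have exp_le := Real.abs_exp_sub_one_le (x := ∑ i, chiSqDiv (Q i) (P i))
    (by rwa [abs_of_nonneg total_nonneg])
  rw [abs_of_nonneg total_nonneg] at exp_le
  rw [← one_add_chiSqDiv_pi (fun i a => (hP i a).ne') hP1 hQ1] at prod_le_exp
  linarith [le_of_abs_le exp_le]

lemma half_sub_le_testing_error_of_sum_chiSqDiv_le (hP : ∀ i a, 0 < P i a)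
    (hP1 : ∀ i, ∑ a, P i a = 1) (hQ1 : ∀ i, ∑ a, Q i a = 1) {ε : ℝ} (hε0 : 0 ≤ ε)
    (hε1 : 2 * ε ^ 2 ≤ 1) (hχ : ∑ i, chiSqDiv (Q i) (P i) ≤ 2 * ε ^ 2)
    (A : Finset (∀ i, α i)) :
    1 / 2 - ε ≤ (∑ x ∈ A, ∏ i, P i (x i) + (1 - ∑ x ∈ A, ∏ i, Q i (x i))) / 2 := by
  classical
  exact half_sub_le_testing_error_of_chiSqDiv_le (fun x => prod_pos fun i _ => hP i (x i))
    (sum_prod_eq_one hP1) hε0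
    (by linarith [chiSqDiv_pi_le_two_mul_sum hP hP1 hQ1 (hχ.trans hε1)]) A

end Product

section BitInsertion

variable {ι : Type*} {p : ℝ} {f : ι ⊕ ι → ℝ}

/-- The packet-size distribution after inserting bits with probability `p`, where `f` is the
original one. The sizes are split into two copies of `ι`, so that `Sum.inl a` is a small size and
`Sum.inr a` the large size to which an insertion takes it. -/
def bitInsertion (p : ℝ) (f : ι ⊕ ι → ℝ) : ι ⊕ ι → ℝ :=
  Sum.elim (fun a => (1 - p) * f (.inl a)) (fun a => f (.inr a) + p * f (.inl a))

section FiniteSizes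

variable [Fintype ι]

lemma sum_bitInsertion (p : ℝ) (f : ι ⊕ ι → ℝ) : ∑ x, bitInsertion p f x = ∑ x, f x := by
  simp only [bitInsertion, Fintype.sum_sum_type, Sum.elim_inl, Sum.elim_inr, sum_add_distrib,
    ← mul_sum]
  ring

lemma chiSqDiv_bitInsertion (p : ℝ) (f : ι ⊕ ι → ℝ) :
    chiSqDiv (bitInsertion p f) f =
      p ^ 2 * ∑ a, f (.inl a) * (1 + f (.inl a) / f (.inr a)) := by
  have small (a : ι) :
      ((1 - p) * f (.inl a) - f (.inl a)) ^ 2 / f (.inl a) = p ^ 2 * f (.inl a) := by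
    rw [show ((1 - p) * f (.inl a) - f (.inl a)) ^ 2 = p ^ 2 * (f (.inl a) * f (.inl a)) by ring,
      mul_div_assoc, mul_self_div_self]
  simp only [chiSqDiv, bitInsertion, Fintype.sum_sum_type, Sum.elim_inl, Sum.elim_inr, small,
    add_sub_cancel_left, mul_sum, ← sum_add_distrib]
  exact sum_congr rfl fun a _ => by ring

lemma chiSqDiv_bitInsertion_le (hf : ∀ x, 0 ≤ f x) (hf1 : ∑ x, f x = 1) {ξ : ℝ} (hξ : 0 ≤ ξ)
    (ratio_le : ∀ a, f (.inl a) / f (.inr a) ≤ ξ) :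
    chiSqDiv (bitInsertion p f) f ≤ p ^ 2 * (1 + ξ) := by
  have small_mass_le_one : ∑ a, f (.inl a) ≤ 1 := by
    rw [Fintype.sum_sum_type] at hf1
    linarith [sum_nonneg fun a (_ : a ∈ univ) => hf (.inr a)]
  rw [chiSqDiv_bitInsertion]
  gcongr
  calc ∑ a, f (.inl a) * (1 + f (.inl a) / f (.inr a))
      ≤ ∑ a, f (.inl a) * (1 + ξ) :=
        sum_le_sum fun a _ => mul_le_mul_of_nonneg_left (by linarith [ratio_le a]) (hf _)
    _ = (∑ a, f (.inl a)) * (1 + ξ) := (sum_mul ..).symm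
    _ ≤ 1 + ξ := mul_le_of_le_one_left (by positivity) small_mass_le_one

end FiniteSizes

variable {α : Type*} [Fintype α] {e : ι ⊕ ι ≃ α} {P Q : α → ℝ}

lemma sum_eq_of_comp_eq_bitInsertion (hQ : Q ∘ e = bitInsertion p (P ∘ e)) :
    ∑ a, Q a = ∑ a, P a := by
  let _ : Fintype ι := .ofInjective (e ∘ .inl) (e.injective.comp Sum.inl_injective)
  calc ∑ a, Q a
      = ∑ x, (Q ∘ e) x := (e.sum_comp Q).symm
    _ = ∑ x, (P ∘ e) x := by rw [hQ, sum_bitInsertion]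
    _ = ∑ a, P a := e.sum_comp P

lemma chiSqDiv_le_of_comp_eq_bitInsertion (hP : ∀ a, 0 ≤ P a) (hP1 : ∑ a, P a = 1) {ξ : ℝ}
    (hξ : 0 ≤ ξ) (ratio_le : ∀ a, P (e (.inl a)) / P (e (.inr a)) ≤ ξ)
    (hQ : Q ∘ e = bitInsertion p (P ∘ e)) : chiSqDiv Q P ≤ p ^ 2 * (1 + ξ) := by
  let _ : Fintype ι := .ofInjective (e ∘ .inl) (e.injective.comp Sum.inl_injective)
  rw [← chiSqDiv_comp_equiv Q P e, hQ]
  exact chiSqDiv_bitInsertion_le (fun x => hP (e x)) ((e.sum_comp P).trans hP1) hξ ratio_le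

end BitInsertion

/-- Splits the sizes `0, …, 2m - 1` into `Sum.inl j = j` and `Sum.inr j = m + j`, the indexing that
`bitInsertion` expects. -/
def finHalves (m : ℕ) : Fin m ⊕ Fin m ≃ Fin (2 * m) :=
  finSumFinEquiv.trans (finCongr (two_mul m).symm)

lemma comp_finHalves_eq_bitInsertion {m : ℕ} {p : ℝ} {f g : ℕ → ℝ}
    (hg : ∀ j < 2 * m, g j = if j < m then (1 - p) * f j else f j + p * f (j - m)) :
    (fun a : Fin (2 * m) => g a) ∘ finHalves m =
      bitInsertion p ((fun a : Fin (2 * m) => f a) ∘ finHalves m) := by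
  ext (j | j)
  · exact (hg j (by omega)).trans (if_pos j.isLt)
  · have insert_large := hg (m + j) (by omega)
    rwa [if_neg (by omega), Nat.add_sub_cancel_left] at insert_large

lemma mul_sq_div_mul_sqrt_mul_one_add_le {ξ : ℝ} (hξ : 1 ≤ ξ) (ε : ℝ) (n : ℕ) :
    n * ((ε / (ξ * √n)) ^ 2 * (1 + ξ)) ≤ 2 * ε ^ 2 := by
  obtain rfl | hn := n.eq_zero_or_pos
  · simpa using sq_nonneg ε
  have hn : (0 : ℝ) < n := by exact_mod_cast hn
  rw [div_pow, mul_pow, Real.sq_sqrt hn.le]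
  calc n * (ε ^ 2 / (ξ ^ 2 * n) * (1 + ξ)) = ε ^ 2 * ((1 + ξ) / ξ ^ 2) := by field_simp
    _ ≤ ε ^ 2 * 2 := by
        gcongr
        rw [div_le_iff₀ (by positivity)]
        nlinarith
    _ = 2 * ε ^ 2 := mul_comm _ _

/-- Covertness in Theorems 1/2: with insertion probability `p = ε/(ξ√n)` in the
packet-size modification setup, for every rejection region `A ⊆ (Fin K)ⁿ` of Willie's
detector, where `P₀` and `P₁` are the `n`-fold products of `f` and `f̃`, the error
probability `(P₀(A) + 1 - P₁(A))/2` is at least `1/2 - ε`. -/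
theorem covertness_of_bit_insertion
    (m : ℕ) (hm : 1 ≤ m) (f : ℕ → ℝ)
    (hf0 : ∀ j < 2 * m, 0 < f j) (hf1 : ∑ j ∈ Finset.range (2 * m), f j = 1)
    (ξ₀ ξ : ℝ)
    (hξ₀ : ξ₀ = (Finset.Icc m (2 * m - 1)).sup'
      (Finset.nonempty_Icc.mpr (by omega)) (fun j => f (j - m) / f j))
    (hξ : ξ = max 1 ξ₀)
    (ε : ℝ) (hε0 : 0 < ε) (hε1 : ε < 1 / 2)
    (n : ℕ) (hn : 1 ≤ n)
    (p : ℝ) (hp : p = ε / (ξ * Real.sqrt n)) (hp1 : p < 1)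
    (ftilde : ℕ → ℝ)
    (hft : ∀ j < 2 * m,
      ftilde j = if j < m then (1 - p) * f j else f j + p * f (j - m)) :
    ∀ A : Finset (Fin n → Fin (2 * m)),
      ((∑ x ∈ A, ∏ i, f (x i).val) + (1 - ∑ x ∈ A, ∏ i, ftilde (x i).val)) / 2
        ≥ 1 / 2 - ε := by
  intro A
  have one_le_ξ : 1 ≤ ξ := hξ ▸ le_max_left _ _
  have ratio_le (j : Fin m) : f j / f (m + j) ≤ ξ := by
    have le_sup := le_sup' (fun j => f (j - m) / f j)
      (mem_Icc.mpr (by omega : m ≤ m + j ∧ m + j ≤ 2 * m - 1))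
    rw [← hξ₀, Nat.add_sub_cancel_left] at le_sup
    exact le_sup.trans (hξ ▸ le_max_right _ _)
  let P (a : Fin (2 * m)) : ℝ := f a
  let Q (a : Fin (2 * m)) : ℝ := ftilde a
  have P_pos (a : Fin (2 * m)) : 0 < P a := hf0 a a.isLt
  have P_sum : ∑ a, P a = 1 := (Fin.sum_univ_eq_sum_range f _).trans hf1
  have Q_eq : Q ∘ finHalves m = bitInsertion p (P ∘ finHalves m) :=
    comp_finHalves_eq_bitInsertion hft
  have Q_sum : ∑ a, Q a = 1 := (sum_eq_of_comp_eq_bitInsertion Q_eq).trans P_sum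
  have packet_chiSq : chiSqDiv Q P ≤ p ^ 2 * (1 + ξ) :=
    chiSqDiv_le_of_comp_eq_bitInsertion (fun a => (P_pos a).le) P_sum (by linarith) ratio_le Q_eq
  have total_chiSq : ∑ _i : Fin n, chiSqDiv Q P ≤ 2 * ε ^ 2 := by
    rw [Fin.sum_const, nsmul_eq_mul]
    exact (mul_le_mul_of_nonneg_left packet_chiSq n.cast_nonneg).trans
      (hp ▸ mul_sq_div_mul_sqrt_mul_one_add_le one_le_ξ ε n)
  exact half_sub_le_testing_error_of_sum_chiSqDiv_le (fun _ => P_pos) (fun _ => P_sum)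
    (fun _ => Q_sum) hε0.le (by nlinarith) total_chiSq A
end

section
/- (Flag-bit covertness, Eq. (19).) In the packet-size modification setup, for each j with m ≤ j ≤ K−1 define r_j = p·f(j−m) / ( (1−p)·f(j) + p·f(j−m) ). Then each r_j ∈ [0,1), r_j ≤ ξ₀·p/(1−p), and Σ_{j=m}^{K−1} f̃(j) · [ ((1−r_j)/2)·ln(1−r_j) + ((1+r_j)/2)·ln(1+r_j) ] ≤ ( ξ₀·p/(1−p) )². -/
/-!
The relative entropy is dominated by the `χ²`-divergence because `log x ≤ x - 1`. For a flag bit of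
parameter `(1 - r) / 2` against the fair bit that divergence is exactly `r ^ 2`, and dropping
the term `p f(j-m)` from the denominator of `r` gives `r ≤ ξ₀ p / (1 - p)`. Averaging costs nothing,
since `f̃` puts mass at most one on the upper half of the sizes.
-/

section BernoulliRelEntropy

/-- The relative entropy of the Bernoulli pmf with parameter `a` with respect to the one with
parameter `b`, in nats; it quantifies how detectable the flag bit is. The convention
`0 * log 0 = 0` is supplied by `Real.log 0 = 0`. -/
noncomputable def bernoulliRelEntropy (a b : ℝ) : ℝ :=
  a * Real.log (a / b) + (1 - a) * Real.log ((1 - a) / (1 - b))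

lemma mul_log_div_le_mul_div_sub_one {a b : ℝ} (ha : 0 ≤ a) (hb : 0 < b) :
    a * Real.log (a / b) ≤ a * (a / b - 1) := by
  obtain rfl | ha := ha.eq_or_lt
  · simp
  · exact mul_le_mul_of_nonneg_left (Real.log_le_sub_one_of_pos (div_pos ha hb)) ha.le

lemma bernoulliRelEntropy_le_chiSq {a b : ℝ} (ha₀ : 0 ≤ a) (ha₁ : a ≤ 1) (hb₀ : 0 < b)
    (hb₁ : b < 1) : bernoulliRelEntropy a b ≤ (a - b) ^ 2 / (b * (1 - b)) := by
  have hb : 0 < 1 - b := sub_pos.mpr hb₁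
  calc bernoulliRelEntropy a b
      ≤ a * (a / b - 1) + (1 - a) * ((1 - a) / (1 - b) - 1) :=
        add_le_add (mul_log_div_le_mul_div_sub_one ha₀ hb₀)
          (mul_log_div_le_mul_div_sub_one (sub_nonneg.mpr ha₁) hb)
    _ = (a - b) ^ 2 / (b * (1 - b)) := by field_simp; ring

lemma bernoulliRelEntropy_half (r : ℝ) :
    bernoulliRelEntropy ((1 - r) / 2) (1 / 2) =
      (1 - r) / 2 * Real.log (1 - r) + (1 + r) / 2 * Real.log (1 + r) := by
  have h₁ : (1 - r) / 2 / (1 / 2) = 1 - r := by ring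
  have h₂ : 1 - (1 - r) / 2 = (1 + r) / 2 := by ring
  have h₃ : (1 + r) / 2 / (1 - 1 / 2) = 1 + r := by ring
  rw [bernoulliRelEntropy, h₁, h₂, h₃]

lemma bernoulliRelEntropy_half_le_sq {r : ℝ} (hr : |r| ≤ 1) :
    bernoulliRelEntropy ((1 - r) / 2) (1 / 2) ≤ r ^ 2 := by
  obtain ⟨hr₀, hr₁⟩ := abs_le.mp hr
  calc bernoulliRelEntropy ((1 - r) / 2) (1 / 2)
      ≤ ((1 - r) / 2 - 1 / 2) ^ 2 / (1 / 2 * (1 - 1 / 2)) :=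
        bernoulliRelEntropy_le_chiSq (by linarith) (by linarith) (by norm_num) (by norm_num)
    _ = r ^ 2 := by ring

lemma sum_mul_bernoulliRelEntropy_half_le_sq {ι : Type*} {s : Finset ι} {w r : ι → ℝ} {B : ℝ}
    (hw : ∀ i ∈ s, 0 ≤ w i) (hw₁ : ∑ i ∈ s, w i ≤ 1) (hr : ∀ i ∈ s, |r i| ≤ 1)
    (hrB : ∀ i ∈ s, |r i| ≤ B) :
    ∑ i ∈ s, w i * bernoulliRelEntropy ((1 - r i) / 2) (1 / 2) ≤ B ^ 2 := by
  have hentropy : ∀ i ∈ s, bernoulliRelEntropy ((1 - r i) / 2) (1 / 2) ≤ B ^ 2 := fun i hi ↦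
    (bernoulliRelEntropy_half_le_sq (hr i hi)).trans
      (sq_le_sq' (neg_le_of_abs_le (hrB i hi)) (le_of_abs_le (hrB i hi)))
  calc ∑ i ∈ s, w i * bernoulliRelEntropy ((1 - r i) / 2) (1 / 2)
      ≤ ∑ i ∈ s, w i * B ^ 2 :=
        Finset.sum_le_sum fun i hi ↦ mul_le_mul_of_nonneg_left (hentropy i hi) (hw i hi)
    _ = (∑ i ∈ s, w i) * B ^ 2 := (Finset.sum_mul ..).symm
    _ ≤ B ^ 2 := mul_le_of_le_one_left (sq_nonneg B) hw₁

end BernoulliRelEntropy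

section MixtureRatio

variable {𝕜 : Type*} [Field 𝕜] [LinearOrder 𝕜] [IsStrictOrderedRing 𝕜] {a b p : 𝕜}

lemma mixture_ratio_mem_Ico (ha : 0 ≤ a) (hb : 0 < b) (hp₀ : 0 ≤ p) (hp₁ : p < 1) :
    p * a / ((1 - p) * b + p * a) ∈ Set.Ico 0 1 := by
  have hpa : 0 ≤ p * a := mul_nonneg hp₀ ha
  have hqb : 0 < (1 - p) * b := mul_pos (sub_pos.mpr hp₁) hb
  have hden : 0 < (1 - p) * b + p * a := add_pos_of_pos_of_nonneg hqb hpa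
  exact ⟨div_nonneg hpa hden.le, (div_lt_one hden).mpr (lt_add_of_pos_left _ hqb)⟩

lemma mixture_ratio_le {c : 𝕜} (ha : 0 ≤ a) (hb : 0 < b) (hp₀ : 0 ≤ p) (hp₁ : p < 1)
    (hc : a / b ≤ c) : p * a / ((1 - p) * b + p * a) ≤ c * p / (1 - p) := by
  have hpa : 0 ≤ p * a := mul_nonneg hp₀ ha
  have hq : 0 < 1 - p := sub_pos.mpr hp₁
  calc p * a / ((1 - p) * b + p * a)
      ≤ p * a / ((1 - p) * b) :=
        div_le_div_of_nonneg_left hpa (mul_pos hq hb) (le_add_of_nonneg_right hpa)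
    _ = a / b * p / (1 - p) := by field_simp
    _ ≤ c * p / (1 - p) := by gcongr

end MixtureRatio

lemma sum_Ico_add_mul_shift_le_sum_range {R : Type*} [Semiring R] [PartialOrder R]
    [IsOrderedRing R] {m : ℕ} {f : ℕ → R} {p : R} (hf : ∀ j < m, 0 ≤ f j) (hp : p ≤ 1) :
    ∑ j ∈ Finset.Ico m (2 * m), (f j + p * f (j - m)) ≤ ∑ j ∈ Finset.range (2 * m), f j := by
  have hshift : ∑ j ∈ Finset.Ico m (2 * m), f (j - m) = ∑ j ∈ Finset.range m, f j := by
    rw [Finset.sum_Ico_eq_sum_range, two_mul, Nat.add_sub_cancel]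
    simp only [Nat.add_sub_cancel_left]
  have hlow : 0 ≤ ∑ j ∈ Finset.range m, f j :=
    Finset.sum_nonneg fun j hj ↦ hf j (Finset.mem_range.mp hj)
  calc ∑ j ∈ Finset.Ico m (2 * m), (f j + p * f (j - m))
      = p * ∑ j ∈ Finset.range m, f j + ∑ j ∈ Finset.Ico m (2 * m), f j := by
        rw [Finset.sum_add_distrib, ← Finset.mul_sum, hshift, add_comm]
    _ ≤ ∑ j ∈ Finset.range m, f j + ∑ j ∈ Finset.Ico m (2 * m), f j := by
        gcongr
        exact mul_le_of_le_one_left hlow hp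
    _ = ∑ j ∈ Finset.range (2 * m), f j :=
        Finset.sum_range_add_sum_Ico f (Nat.le_mul_of_pos_left m two_pos)

/-- Flag-bit covertness (Eq. (19)): in the packet-size modification setup, with
`r_j = p f(j-m) / ((1-p) f(j) + p f(j-m))` for `m ≤ j ≤ K-1`, each `r_j ∈ [0,1)`,
`r_j ≤ ξ₀ p/(1-p)`, and the `f̃`-weighted sum of the Bernoulli relative entropies
`((1-r_j)/2) ln(1-r_j) + ((1+r_j)/2) ln(1+r_j)` is at most `(ξ₀ p/(1-p))²`. -/
theorem flag_bit_covertness_bound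
    (m : ℕ) (hm : 1 ≤ m) (f : ℕ → ℝ)
    (hf0 : ∀ j < 2 * m, 0 < f j) (hf1 : ∑ j ∈ Finset.range (2 * m), f j = 1)
    (p : ℝ) (hp0 : 0 < p) (hp1 : p < 1)
    (ftilde : ℕ → ℝ)
    (hft : ∀ j < 2 * m,
      ftilde j = if j < m then (1 - p) * f j else f j + p * f (j - m))
    (ξ₀ : ℝ)
    (hξ₀ : ξ₀ = (Finset.Icc m (2 * m - 1)).sup'
      (Finset.nonempty_Icc.mpr (by omega)) (fun j => f (j - m) / f j))
    (r : ℕ → ℝ)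
    (hr : ∀ j, m ≤ j → j < 2 * m →
      r j = p * f (j - m) / ((1 - p) * f j + p * f (j - m))) :
    (∀ j, m ≤ j → j < 2 * m →
      0 ≤ r j ∧ r j < 1 ∧ r j ≤ ξ₀ * p / (1 - p)) ∧
    (∑ j ∈ Finset.Icc m (2 * m - 1),
        ftilde j * (((1 - r j) / 2) * Real.log (1 - r j)
          + ((1 + r j) / 2) * Real.log (1 + r j))
      ≤ (ξ₀ * p / (1 - p)) ^ 2) := by
  have hbounds : ∀ j, m ≤ j → j < 2 * m → 0 ≤ r j ∧ r j < 1 ∧ r j ≤ ξ₀ * p / (1 - p) := by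
    intro j hmj hj
    have hfj := hf0 j hj
    have hfjm := (hf0 (j - m) (by omega)).le
    have hξ : f (j - m) / f j ≤ ξ₀ := hξ₀ ▸
      Finset.le_sup' (fun j ↦ f (j - m) / f j) (Finset.mem_Icc.mpr ⟨hmj, by omega⟩)
    rw [hr j hmj hj, ← and_assoc]
    exact ⟨mixture_ratio_mem_Ico hfjm hfj hp0.le hp1, mixture_ratio_le hfjm hfj hp0.le hp1 hξ⟩
  refine ⟨hbounds, ?_⟩
  have hft_upper : ∀ j ∈ Finset.Ico m (2 * m), ftilde j = f j + p * f (j - m) := fun j hj ↦ by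
    rw [hft j (Finset.mem_Ico.mp hj).2, if_neg (Finset.mem_Ico.mp hj).1.not_gt]
  have hft_nonneg : ∀ j ∈ Finset.Ico m (2 * m), 0 ≤ ftilde j := fun j hj ↦ by
    have hj₂ := (Finset.mem_Ico.mp hj).2
    rw [hft_upper j hj]
    exact add_nonneg (hf0 j hj₂).le (mul_nonneg hp0.le (hf0 (j - m) (by omega)).le)
  have hft_mass : ∑ j ∈ Finset.Ico m (2 * m), ftilde j ≤ 1 := by
    rw [Finset.sum_congr rfl hft_upper, ← hf1]
    exact sum_Ico_add_mul_shift_le_sum_range (fun j hj ↦ (hf0 j (by omega)).le) hp1.le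
  have hr_mem : ∀ j ∈ Finset.Ico m (2 * m), 0 ≤ r j ∧ r j < 1 ∧ r j ≤ ξ₀ * p / (1 - p) :=
    fun j hj ↦ hbounds j (Finset.mem_Ico.mp hj).1 (Finset.mem_Ico.mp hj).2
  have h2m : ¬IsMin (2 * m) := not_isMin_of_lt (show m < 2 * m by omega)
  simp only [← bernoulliRelEntropy_half, Finset.Icc_sub_one_right_eq_Ico_of_not_isMin h2m]
  exact sum_mul_bernoulliRelEntropy_half_le_sq hft_nonneg hft_mass
    (fun j hj ↦ (abs_of_nonneg (hr_mem j hj).1).trans_le (hr_mem j hj).2.1.le)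
    (fun j hj ↦ (abs_of_nonneg (hr_mem j hj).1).trans_le (hr_mem j hj).2.2)
end
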